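/- Let A be an associative (not necessarily commutative) ring in which 2 is invertible, and let λ, λ' ∈ A satisfy λ·λ' = −λ'·λ. Define maps T_λ, S_μ : A × A → A × A by T_λ(c, c') = (c + λ, c' − (1/2)·λ·c) and S_μ(c, c') = (c, c' + μ). Then T_λ ∘ T_{λ'} = S_{λ'·λ} ∘ T_{λ'} ∘ T_λ; moreover S_μ ∘ T_λ = T_λ ∘ S_μ and S_μ ∘ S_ν = S_ν ∘ S_μ for all λ, μ, ν. -/

import Mathlib

/-!
For a biadditive map `B`, the two orders of composing `(c, c') ↦ (c + l, c' - B l c)` and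
`(c, c') ↦ (c + l', c' - B l' c)` differ only by the cross terms `B l l'` and `B l' l`, which do not
depend on `(c, c')`. The discrepancy is therefore the shift by the antisymmetrization
`B l' l - B l l'`. When `B l c = ½ l c` and `l`, `l'` anticommute, it equals
`½ l' l + ½ l' l = l' l`, where the two halves add up to one.
-/

section GaugeMaps

variable {V W : Type*}

/-- The shift `S_m` of the second potential, `δC_{4k-2} = m`. -/
def gaugeShift (V : Type*) [Add W] (m : W) (p : V × W) : V × W :=
  (p.1, p.2 + m)

/-- The finite gauge transformation `T_l` with Chern-Simons coupling `B`: it translates the first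
potential by `l` and compensates in the second by `-B l c`. In the supergravity case,
`B l c = ½ l c`. -/
def gaugeTransform [AddZeroClass V] [AddCommGroup W] (B : V →+ V →+ W) (l : V) (p : V × W) :
    V × W :=
  (p.1 + l, p.2 - B l p.1)

theorem gaugeShift_commute_gaugeShift [AddCommSemigroup W] (m n : W) :
    Function.Commute (gaugeShift V m) (gaugeShift V n) :=
  fun _ => Prod.ext rfl (add_right_comm _ _ _)

theorem gaugeShift_commute_gaugeTransform [AddZeroClass V] [AddCommGroup W] (B : V →+ V →+ W)
    (m : W) (l : V) : Function.Commute (gaugeShift V m) (gaugeTransform B l) :=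
  fun _ => Prod.ext rfl (sub_add_eq_add_sub _ _ _)

theorem gaugeTransform_comp_gaugeTransform [AddCommMonoid V] [AddCommGroup W] (B : V →+ V →+ W)
    (l l' : V) :
    gaugeTransform B l ∘ gaugeTransform B l' =
      gaugeShift V (B l' l - B l l') ∘ gaugeTransform B l' ∘ gaugeTransform B l := by
  funext ⟨c, c'⟩
  refine Prod.ext (add_right_comm c l' l) ?_
  change c' - B l' c - B l (c + l') = c' - B l c - B l' (c + l) + (B l' l - B l l')
  rw [map_add, map_add]
  abel

end GaugeMaps

theorem invOf_two_mul_sub_of_anticommute {A : Type*} [Ring A] [Invertible (2 : A)] {a b : A}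
    (h : a * b = -(b * a)) : ⅟(2 : A) * b * a - ⅟(2 : A) * a * b = b * a := by
  rw [mul_assoc, mul_assoc, h, mul_neg, sub_neg_eq_add, ← add_mul, invOf_two_add_invOf_two, one_mul]

/-- In an associative ring `A` in which `2` is invertible, for
anticommuting elements `λ, λ'` the gauge transformations
`T_λ(c, c') = (c + λ, c' − ½·λ·c)` and shifts `S_μ(c, c') = (c, c' + μ)` satisfy
`T_λ ∘ T_{λ'} = S_{λ'·λ} ∘ T_{λ'} ∘ T_λ`, `S_μ ∘ T_λ = T_λ ∘ S_μ`, and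
`S_μ ∘ S_ν = S_ν ∘ S_μ`. -/
theorem stmt_6 (A : Type*) [Ring A] [Invertible (2 : A)] (lam lam' : A)
    (hanti : lam * lam' = -(lam' * lam)) :
    let T : A → A × A → A × A :=
      fun l p => (p.1 + l, p.2 - ⅟(2 : A) * l * p.1)
    let S : A → A × A → A × A := fun m p => (p.1, p.2 + m)
    (T lam ∘ T lam' = S (lam' * lam) ∘ T lam' ∘ T lam) ∧
    (∀ l m : A, S m ∘ T l = T l ∘ S m) ∧
    (∀ m n : A, S m ∘ S n = S n ∘ S m) := by
  intro T S
  let B : A →+ A →+ A := AddMonoidHom.mul.comp (AddMonoidHom.mulLeft ⅟(2 : A))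
  have commutator : T lam ∘ T lam' =
      S (⅟(2 : A) * lam' * lam - ⅟(2 : A) * lam * lam') ∘ T lam' ∘ T lam :=
    gaugeTransform_comp_gaugeTransform B lam lam'
  rw [invOf_two_mul_sub_of_anticommute hanti] at commutator
  exact ⟨commutator, fun l m => (gaugeShift_commute_gaugeTransform B m l).comp_eq,
    fun m n => (gaugeShift_commute_gaugeShift m n).comp_eq⟩
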